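/- For every n ≥ 1, the zombie number of the n-dimensional hypercube is z(Q_n) = ⌈2n/3⌉. -/

import Mathlib

open SimpleGraph

/-! ### Pursuit games on graphs

A round of the game is recorded as a pair `(c, r)` where `c : Fin k → V` is the
configuration of the `k` pursuers (cops or zombies) and `r : V` the position of the
evader (robber or survivor).  In a round the pursuers move first (knowing the full
history), then the evader moves (knowing the full history and the pursuers' new
configuration).  Strategies are functions of the full history, so no generality is lost. -/

/-- The history of a play: the list of (pursuer configuration, evader position) pairs
for the completed rounds so far. -/
abbrev GameHist (V : Type*) (k : ℕ) := List ((Fin k → V) × V)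

/-- The history determined by the sequences `c` (pursuer configurations) and `r`
(evader positions), recording rounds `0, …, n-1`. -/
def histUpTo {V : Type*} {k : ℕ} (c : ℕ → Fin k → V) (r : ℕ → V) (n : ℕ) : GameHist V k :=
  (List.range n).map fun i => (c i, r i)

/-- The robber/survivor always moves along an edge or stays still. -/
def RobberLegal {V : Type*} (G : SimpleGraph V) (r : ℕ → V) : Prop :=
  ∀ n, r (n+1) = r n ∨ G.Adj (r n) (r (n+1))

/-- At step `n`, each cop stays still or moves along an edge. -/
def CopStepLegal {V : Type*} (G : SimpleGraph V) {k : ℕ} (c : ℕ → Fin k → V) (n : ℕ) : Prop :=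
  ∀ i, c (n+1) i = c n i ∨ G.Adj (c n i) (c (n+1) i)

/-- At step `n`, each zombie moves along an edge to a vertex strictly closer to the
survivor's current position `r n`. -/
def ZombieStepLegal {V : Type*} (G : SimpleGraph V) {k : ℕ} (c : ℕ → Fin k → V) (r : ℕ → V)
    (n : ℕ) : Prop :=
  ∀ i, G.Adj (c n i) (c (n+1) i) ∧ G.dist (c (n+1) i) (r n) < G.dist (c n i) (r n)

/-- The pursuers follow the history-dependent strategy `mv`: their configuration at time
`n+1` is the strategy applied to the history of rounds `0, …, n`. -/
def FollowsStrat {V : Type*} {k : ℕ} (mv : GameHist V k → Fin k → V)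
    (c : ℕ → Fin k → V) (r : ℕ → V) : Prop :=
  ∀ n, c (n+1) = mv (histUpTo c r (n+1))

/-- Starting from the cop configuration `cpos` (the robber then chooses any starting
vertex, and the cops move first), the cops have a strategy catching the robber: in every
play consistent with the strategy there is a time at which some cop and the robber occupy
the same vertex, all cop moves made up to and including the capturing move being legal. -/
def CopsCatchFrom {V : Type*} (G : SimpleGraph V) {k : ℕ} (cpos : Fin k → V) : Prop :=
  ∃ mv : GameHist V k → Fin k → V,
    ∀ (c : ℕ → Fin k → V) (r : ℕ → V),
      c 0 = cpos → FollowsStrat mv c r → RobberLegal G r →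
      ∃ n, ((∃ i, c n i = r n) ∧ ∀ m < n, CopStepLegal G c m) ∨
           ((∃ i, c (n+1) i = r n) ∧ ∀ m ≤ n, CopStepLegal G c m)

/-- `k` cops have a winning strategy on `G`. -/
def CopsWinWith {V : Type*} (G : SimpleGraph V) (k : ℕ) : Prop :=
  ∃ cpos : Fin k → V, CopsCatchFrom G cpos

/-- The cop number of `G`: the least `k` such that `k` cops have a winning strategy. -/
noncomputable def copNumber {V : Type*} (G : SimpleGraph V) : ℕ :=
  sInf {k | CopsWinWith G k}

/-- Starting from the zombie configuration `zpos` and survivor position `spos`, with the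
zombies to move, the zombies have a strategy catching the survivor: in every play
consistent with the strategy there is a time at which some zombie and the survivor occupy
the same vertex, all zombie moves made up to and including the capturing move being legal
(each zombie moves along an edge, strictly decreasing its distance to the survivor). -/
def ZombiesCatchFrom {V : Type*} (G : SimpleGraph V) {k : ℕ} (zpos : Fin k → V) (spos : V) :
    Prop :=
  ∃ mv : GameHist V k → Fin k → V,
    ∀ (c : ℕ → Fin k → V) (r : ℕ → V),
      c 0 = zpos → r 0 = spos → FollowsStrat mv c r → RobberLegal G r →
      ∃ n, ((∃ i, c n i = r n) ∧ ∀ m < n, ZombieStepLegal G c r m) ∨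
           ((∃ i, c (n+1) i = r n) ∧ ∀ m ≤ n, ZombieStepLegal G c r m)

/-- `k` zombies have a winning strategy on `G`: they can choose starting vertices so that
wherever the survivor starts, they catch the survivor. -/
def ZombiesWinWith {V : Type*} (G : SimpleGraph V) (k : ℕ) : Prop :=
  ∃ zpos : Fin k → V, ∀ spos : V, ZombiesCatchFrom G zpos spos

/-- The zombie number of `G`: the least `k` such that `k` zombies have a winning strategy. -/
noncomputable def zombieNumber {V : Type*} (G : SimpleGraph V) : ℕ :=
  sInf {k | ZombiesWinWith G k}

/-- Starting from the zombie configuration `zpos` and survivor position `spos`, with the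
zombies to move, the survivor has a strategy evading capture forever: in every play where
the survivor follows the strategy and the zombies move legally, the survivor's moves are
legal and no zombie ever occupies the survivor's vertex. -/
def SurvivorEvadesFrom {V : Type*} (G : SimpleGraph V) {k : ℕ} (zpos : Fin k → V) (spos : V) :
    Prop :=
  ∃ mv : GameHist V k → (Fin k → V) → V,
    ∀ (c : ℕ → Fin k → V) (r : ℕ → V),
      c 0 = zpos → r 0 = spos →
      (∀ n, r (n+1) = mv (histUpTo c r (n+1)) (c (n+1))) →
      (∀ n, ZombieStepLegal G c r n) →
      RobberLegal G r ∧ ∀ n, (∀ i, c n i ≠ r n) ∧ (∀ i, c (n+1) i ≠ r n)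

/-- Zombie-move legality in the variant where in each round the survivor moves first:
at step `n` each zombie moves along an edge, strictly decreasing its distance to the
survivor's current position `r (n+1)`. -/
def ZombieStepLegalAfter {V : Type*} (G : SimpleGraph V) {k : ℕ} (c : ℕ → Fin k → V)
    (r : ℕ → V) (n : ℕ) : Prop :=
  ∀ i, G.Adj (c n i) (c (n+1) i) ∧ G.dist (c (n+1) i) (r (n+1)) < G.dist (c n i) (r (n+1))

/-- Starting from the zombie configuration `zpos` and survivor position `spos`, with the
survivor to move (the zombies then responding each round), the zombies have a strategy
catching the survivor. -/
def ZombiesCatchFromSurvivorToMove {V : Type*} (G : SimpleGraph V) {k : ℕ}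
    (zpos : Fin k → V) (spos : V) : Prop :=
  ∃ mv : GameHist V k → V → Fin k → V,
    ∀ (c : ℕ → Fin k → V) (r : ℕ → V),
      c 0 = zpos → r 0 = spos →
      (∀ n, c (n+1) = mv (histUpTo c r (n+1)) (r (n+1))) →
      RobberLegal G r →
      ∃ n, (∃ i, c 0 i = r 0) ∨
           ((∃ i, c n i = r (n+1)) ∧ ∀ m < n, ZombieStepLegalAfter G c r m) ∨
           ((∃ i, c (n+1) i = r (n+1)) ∧ ∀ m ≤ n, ZombieStepLegalAfter G c r m)

/-! ### The graphs `T_x`, the arm graphs `A_n`, and attaching an arm to a graph -/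

/-- `|i - j| = 1 or 4` for `i j : Fin 5`, i.e. `i` and `j` are cyclically consecutive. -/
def fin5adj (i j : Fin 5) : Prop :=
  ((i : ℕ) + 1) % 5 = (j : ℕ) ∨ ((j : ℕ) + 1) % 5 = (i : ℕ)

/-- The vertices of the arm graph `A_n`: the vertex `b₂⁻¹` (`start`), the vertex `b₀ⁿ`
(`finish`), and for each copy `T_x` (`x : Fin n`) the inside vertices `a_i^x`
(`inner x i`), the outside vertices `b_i^x` (`outer x i`) and the center `c^x`
(`center x`). -/
inductive ArmVert (n : ℕ) : Type
  | start : ArmVert n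
  | finish : ArmVert n
  | inner : Fin n → Fin 5 → ArmVert n
  | outer : Fin n → Fin 5 → ArmVert n
  | center : Fin n → ArmVert n
  deriving DecidableEq

/-- One direction of the edge relation of the arm graph `A_n`. -/
def armRel (n : ℕ) : ArmVert n → ArmVert n → Prop
  | .inner x i, .inner y j => x = y ∧ fin5adj i j
  | .outer x i, .outer y j => (x = y ∧ fin5adj i j) ∨ ((x : ℕ) + 1 = (y : ℕ) ∧ (i : ℕ) = 2 ∧ (j : ℕ) = 0)
  | .inner x i, .outer y j => x = y ∧ (i = j ∨ fin5adj i j)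
  | .inner x _, .center y => x = y
  | .start, .outer y j => (y : ℕ) = 0 ∧ (j : ℕ) = 0
  | .outer x i, .finish => (x : ℕ) + 1 = n ∧ (i : ℕ) = 2
  | .start, .finish => n = 0
  | _, _ => False

/-- The arm graph `A_n`. -/
def armGraph (n : ℕ) : SimpleGraph (ArmVert n) := SimpleGraph.fromRel (armRel n)

/-- The index of the copy `T_x` containing a vertex of `A_n` (if any). -/
def copyIdx {n : ℕ} : ArmVert n → Option (Fin n)
  | .inner x _ => some x
  | .outer x _ => some x
  | .center x => some x
  | _ => none

/-- The vertex `b₀ˣ` of `A_n` (for `x = n` this is the final vertex `b₀ⁿ`). -/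
def b0 (n x : ℕ) : ArmVert n :=
  if h : x < n then ArmVert.outer ⟨x, h⟩ 0 else ArmVert.finish

/-- The vertex `b₂^{x-1}` of `A_n` (for `x = 0` this is the vertex `b₂⁻¹`). -/
def b2prev (n x : ℕ) : ArmVert n :=
  if h : 1 ≤ x ∧ x - 1 < n then ArmVert.outer ⟨x - 1, h.2⟩ 2 else ArmVert.start

/-- The vertex lies in the copy `T_x`. -/
def InCopy {W : Type*} {n : ℕ} (x : ℕ) (u : W ⊕ ArmVert n) : Prop :=
  ∃ (a : ArmVert n) (y : Fin n), u = Sum.inr a ∧ copyIdx a = some y ∧ (y : ℕ) = x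

/-- One direction of the edge relation of the graph obtained from a graph `H` and the
arm `A_n` by adding an edge from the vertex `b₂⁻¹` of `A_n` to the vertex `v` of `H`. -/
def combRel {W : Type*} (H : SimpleGraph W) (v : W) (n : ℕ) :
    (W ⊕ ArmVert n) → (W ⊕ ArmVert n) → Prop
  | Sum.inl w, Sum.inl w' => H.Adj w w'
  | Sum.inr a, Sum.inr a' => (armGraph n).Adj a a'
  | Sum.inl w, Sum.inr a => w = v ∧ a = ArmVert.start
  | _, _ => False

/-- The graph obtained from `H` and the arm `A_n` by adding an edge from the vertex
`b₂⁻¹` of `A_n` to the vertex `v` of `H`. -/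
def combGraph {W : Type*} (H : SimpleGraph W) (v : W) (n : ℕ) :
    SimpleGraph (W ⊕ ArmVert n) :=
  SimpleGraph.fromRel (combRel H v n)

/-! ### The graphs `Z_{k,m}(H)` -/

/-- The vertices of `Z_{k,m}(H)` where `H` has vertex type `W` and `p = 4*(m-k)`:
the vertices of `H`, for each vertex of `H` a path on `p` vertices, and for each
vertex of `H` `m` copies of the arm graph `A_p`. -/
abbrev ZVert (W : Type*) (m p : ℕ) : Type _ := W ⊕ (W × Fin p) ⊕ (W × Fin m × ArmVert p)

/-- One direction of the edge relation of `Z_{k,m}(H)`. -/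
def zRel {W : Type*} (H : SimpleGraph W) (m p : ℕ) : ZVert W m p → ZVert W m p → Prop
  | Sum.inl w, Sum.inl w' => H.Adj w w'
  | Sum.inl w, Sum.inr (Sum.inl (w', j)) => w = w' ∧ (j : ℕ) = 0
  | Sum.inr (Sum.inl (w, j)), Sum.inr (Sum.inl (w', j')) => w = w' ∧ (j : ℕ) + 1 = (j' : ℕ)
  | Sum.inl w, Sum.inr (Sum.inr (w', _, a)) => w = w' ∧ a = ArmVert.start
  | Sum.inr (Sum.inr (w, i, a)), Sum.inr (Sum.inr (w', i', a')) =>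
      w = w' ∧ i = i' ∧ (armGraph p).Adj a a'
  | _, _ => False

/-- The graph `Z_{k,m}(H)`: to each vertex `v` of `H` we attach (by an edge from `v` to
the first path vertex, resp. to `b₂⁻¹`) one path on `4*(m-k)` vertices and `m` copies of
the arm graph `A_{4*(m-k)}`. -/
def ZGraph {W : Type*} (H : SimpleGraph W) (k m : ℕ) :
    SimpleGraph (ZVert W m (4 * (m - k))) :=
  SimpleGraph.fromRel (zRel H m (4 * (m - k)))

/-! ### Hypercubes and block intersection graphs -/

/-- The `n`-dimensional hypercube: vertices are `Fin n → Bool`, two vertices being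
adjacent exactly when they differ in exactly one coordinate. -/
def hypercube (n : ℕ) : SimpleGraph (Fin n → Bool) :=
  SimpleGraph.fromRel fun x y => ∃ i, x i ≠ y i ∧ ∀ j, j ≠ i → x j = y j

/-- `(P, B)` is a balanced incomplete block design with parameters `(v, k, 1)`:
`P` has `v` points, every block has `k` points, and every pair of distinct points lies
in exactly one block. -/
def IsBIBD (P : Type*) (B : Finset (Finset P)) (v k : ℕ) : Prop :=
  Nat.card P = v ∧ (∀ b ∈ B, b.card = k) ∧
    ∀ p q : P, p ≠ q → ∃! b : Finset P, b ∈ B ∧ p ∈ b ∧ q ∈ b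

/-- The block intersection graph of a collection `B` of blocks: vertices are the blocks,
two distinct blocks being adjacent exactly when they intersect. -/
def blockGraph {P : Type*} (B : Finset (Finset P)) : SimpleGraph {b // b ∈ B} :=
  SimpleGraph.fromRel fun b b' => ∃ p, p ∈ b.val ∧ p ∈ b'.val

/-! ### Zombie-good positions on a graph with an attached arm -/

/-- A position (with the zombies to move) in the game on the graph obtained by attaching
the arm `A_n` to `H` at `v` is `x`-zombie-good if: the survivor is in some `T_y` with
`y ≥ x` or at `b₀ⁿ`; for some `i ≥ 1` the zombies `z_1, …, z_i` are all at `b₀ˣ`; the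
remaining zombies are in `H ∪ {b₂⁻¹} ∪ T_0 ∪ ⋯ ∪ T_{x-1}`; consecutive zombie distances
to the survivor satisfy `0 ≤ d_{j+1} - d_j ≤ 4`; and `d_m - d_1 ≥ n - x`. -/
def ZombieGood {W : Type*} (H : SimpleGraph W) (v : W) (n m x : ℕ)
    (zpos : Fin m → (W ⊕ ArmVert n)) (spos : W ⊕ ArmVert n) : Prop :=
  (∃ a : ArmVert n, spos = Sum.inr a ∧
      ((∃ y : Fin n, copyIdx a = some y ∧ x ≤ (y : ℕ)) ∨ a = ArmVert.finish)) ∧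
  (∃ i : ℕ, 1 ≤ i ∧ i ≤ m ∧
      (∀ j : Fin m, (j : ℕ) < i → zpos j = Sum.inr (b0 n x)) ∧
      (∀ j : Fin m, i ≤ (j : ℕ) →
        (∃ w, zpos j = Sum.inl w) ∨ zpos j = Sum.inr ArmVert.start ∨
          (∃ (a : ArmVert n) (y : Fin n), zpos j = Sum.inr a ∧ copyIdx a = some y ∧ (y : ℕ) < x))) ∧
  (∀ j : Fin m, ∀ h : (j : ℕ) + 1 < m,
      (combGraph H v n).dist spos (zpos j) ≤ (combGraph H v n).dist spos (zpos ⟨(j : ℕ) + 1, h⟩) ∧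
      (combGraph H v n).dist spos (zpos ⟨(j : ℕ) + 1, h⟩) - (combGraph H v n).dist spos (zpos j) ≤ 4) ∧
  (∀ hm : 1 ≤ m,
      n - x ≤ (combGraph H v n).dist spos (zpos ⟨m - 1, by omega⟩) -
        (combGraph H v n).dist spos (zpos ⟨0, by omega⟩))

/-! The vertices of a hypercube split into two parity classes, and every zombie changes class in
every round.

If `3 * k < 2 * n`, the survivor moves in every round and keeps at most half of the zombies at odd
distance, and none at distance less than 2. After a zombie move the distances are positive, and the
survivor must not step along a coordinate that separates them from a zombie at distance 1 or 2. As
at most half of the zombies are then at even distance, at most `k + k / 2 < n` coordinates are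
forbidden.

If `2 * n ≤ 3 * k`, the zombies start evenly split between the two classes, and stay so. Until a
capture the distances to the survivor therefore sum to at least `k + k / 2 ≥ n`. This sum never
increases over a round. If it stays the same, the survivor has moved along a coordinate in which
they agreed with all zombies; as the sets of separating coordinates did not cover this coordinate,
two of them overlapped, and the zombies can respond so that their union grows. -/

section Pursuit

variable {V : Type*} {k : ℕ} {G : SimpleGraph V} {s s' : V} {z z' : Fin k → V}

/-- The zombies may move from the configuration `z` to `z'` when the survivor is at `s`. -/
def ZombieMove (G : SimpleGraph V) (s : V) (z z' : Fin k → V) : Prop :=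
  ∀ i, G.Adj (z i) (z' i) ∧ G.dist (z' i) s < G.dist (z i) s

/-- The survivor may move from `s` to `s'`, passing included. -/
def SurvivorMove (G : SimpleGraph V) (s s' : V) : Prop :=
  s' = s ∨ G.Adj s s'

lemma histUpTo_succ (c : ℕ → Fin k → V) (r : ℕ → V) (n : ℕ) :
    histUpTo c r (n + 1) = histUpTo c r n ++ [(c n, r n)] := by
  simp only [histUpTo, List.range_succ, List.map_append, List.map_cons, List.map_nil]

lemma histUpTo_succ_eq_cons (c : ℕ → Fin k → V) (r : ℕ → V) (n : ℕ) :
    histUpTo c r (n + 1) =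
      (c 0, r 0) :: histUpTo (fun t ↦ c (t + 1)) (fun t ↦ r (t + 1)) n := by
  simp only [histUpTo, List.range_succ_eq_map, List.map_cons, List.map_map, Function.comp_def,
    Nat.succ_eq_add_one]

lemma zombiesCatchFrom_of_eq (h : ∃ i, z i = s) : ZombiesCatchFrom G z s := by
  refine ⟨fun _ ↦ z, fun c r hc hr _ _ ↦ ⟨0, .inl ⟨?_, by simp⟩⟩⟩
  rwa [hc, hr]

lemma zombiesCatchFrom_of_zombieMove_of_eq (hmove : ZombieMove G s z z') (h : ∃ i, z' i = s) :
    ZombiesCatchFrom G z s := by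
  refine ⟨fun _ ↦ z', fun c r hc hr hf _ ↦ ⟨0, .inr ⟨?_, fun m hm ↦ ?_⟩⟩⟩
  · rwa [hf, hr]
  · obtain rfl := Nat.le_zero.1 hm
    subst hc hr
    rwa [ZombieStepLegal, hf 0]

/-- After the first round the zombies play on with the strategy that wins from the position
reached, forgetting the first entry of the history. -/
lemma zombiesCatchFrom_of_zombieMove (hmove : ZombieMove G s z z')
    (h : ∀ s', SurvivorMove G s s' → ZombiesCatchFrom G z' s') : ZombiesCatchFrom G z s := by
  choose! strat hstrat using h
  refine ⟨fun
    | _ :: p :: tail => strat p.2 (p :: tail)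
    | _ => z', fun c r hc hr hf hlegal ↦ ?_⟩
  have hc₁ : c 1 = z' := hf 0
  have hfirst : ZombieStepLegal G c r 0 := by subst hc hr hc₁; exact hmove
  have hfollows : FollowsStrat (strat (r 1)) (fun t ↦ c (t + 1)) (fun t ↦ r (t + 1)) := by
    intro t
    simp only [hf (t + 1), histUpTo_succ_eq_cons, zero_add]
  have hall {P : ℕ → Prop} (h₀ : P 0) {t : ℕ} (hP : ∀ m < t, P (m + 1)) : ∀ m < t + 1, P m
    | 0, _ => h₀
    | m + 1, hm => hP m (Nat.lt_of_succ_lt_succ hm)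
  obtain ⟨t, ⟨hcap, hsteps⟩ | ⟨hcap, hsteps⟩⟩ := hstrat (r 1) (hr ▸ hlegal 0) _ _ hc₁ rfl hfollows
    fun t ↦ hlegal (t + 1)
  · exact ⟨t + 1, .inl ⟨hcap, hall hfirst hsteps⟩⟩
  · exact ⟨t + 1, .inr ⟨hcap, fun m hm ↦ hall hfirst
      (fun m hm ↦ hsteps m (Nat.lt_succ_iff.1 hm)) m (Nat.lt_succ_iff.2 hm)⟩⟩

lemma exists_play (strat : GameHist V k → Fin k → V) (respond : (Fin k → V) → V → V)
    (z : Fin k → V) (s : V) :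
    ∃ (c : ℕ → Fin k → V) (r : ℕ → V), c 0 = z ∧ r 0 = s ∧ FollowsStrat strat c r ∧
      ∀ t, r (t + 1) = respond (c (t + 1)) (r t) := by
  let round (p : GameHist V k × (Fin k → V) × V) : GameHist V k × (Fin k → V) × V :=
    let hist := p.1 ++ [p.2]
    (hist, strat hist, respond (strat hist) p.2.2)
  let state (t : ℕ) := round^[t] ([], z, s)
  have hstate (t : ℕ) : state (t + 1) = round (state t) := Function.iterate_succ_apply' ..
  have hhist (t : ℕ) :
      (state t).1 = histUpTo (fun t ↦ (state t).2.1) (fun t ↦ (state t).2.2) t := by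
    induction t with
    | zero => rfl
    | succ t ih => rw [histUpTo_succ, ← ih, hstate]
  refine ⟨fun t ↦ (state t).2.1, fun t ↦ (state t).2.2, rfl, rfl, fun t ↦ ?_, fun t ↦ ?_⟩
  · rw [← hhist]
    simp only [hstate, round]
  · simp only [hstate, round]

theorem not_zombiesCatchFrom_of_invariant {Safe : (Fin k → V) → V → Prop}
    (hfree : ∀ z s, Safe z s → ∀ i, z i ≠ s)
    (hround : ∀ z s z', Safe z s → ZombieMove G s z z' →
      (∀ i, z' i ≠ s) ∧ ∃ s', SurvivorMove G s s' ∧ Safe z' s')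
    (hsafe : Safe z s) : ¬ ZombiesCatchFrom G z s := by
  rintro ⟨strat, hstrat⟩
  have hrespond (z' : Fin k → V) (s : V) : ∃ s', SurvivorMove G s s' ∧
      ((∃ s', SurvivorMove G s s' ∧ Safe z' s') → Safe z' s') := by
    by_cases h : ∃ s', SurvivorMove G s s' ∧ Safe z' s'
    · obtain ⟨s', hmove, hs'⟩ := h
      exact ⟨s', hmove, fun _ ↦ hs'⟩
    · exact ⟨s, .inl rfl, fun h' ↦ absurd h' h⟩
  choose respond hmove hrespond using hrespond
  obtain ⟨c, r, hc, hr, hfollows, hplay⟩ := exists_play strat respond z s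
  have hinv (t : ℕ) (hlegal : ∀ m < t, ZombieStepLegal G c r m) : Safe (c t) (r t) := by
    induction t with
    | zero => rwa [hc, hr]
    | succ t ih =>
      rw [hplay]
      exact hrespond _ _ (hround _ _ _ (ih fun m hm ↦ hlegal m (hm.trans t.lt_succ_self))
        (hlegal t t.lt_succ_self)).2
  obtain ⟨t, ⟨⟨i, hi⟩, hlegal⟩ | ⟨⟨i, hi⟩, hlegal⟩⟩ := hstrat c r hc hr hfollows
    fun t ↦ hplay t ▸ hmove _ _
  · exact hfree _ _ (hinv t hlegal) i hi
  · exact (hround _ _ _ (hinv t fun m hm ↦ hlegal m hm.le) (hlegal t le_rfl)).1 i hi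

end Pursuit

section Cube

open Finset

variable {ι : Type*}

/-- The neighbour of the vertex `x` of the cube in direction `j`. -/
def flipCoord [DecidableEq ι] (x : ι → Bool) (j : ι) : ι → Bool :=
  Function.update x j (!x j)

lemma flipCoord_apply [DecidableEq ι] (x : ι → Bool) (j i : ι) :
    flipCoord x j i = if i = j then !x i else x i := by
  rw [flipCoord, Function.update_apply]
  split_ifs with h
  · rw [h]
  · rfl

lemma flipCoord_flipCoord [DecidableEq ι] (x : ι → Bool) (j : ι) :
    flipCoord (flipCoord x j) j = x := by
  simp [flipCoord]

lemma flipCoord_injective [DecidableEq ι] (x : ι → Bool) : Function.Injective (flipCoord x) := by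
  intro i j h
  by_contra hij
  simpa [flipCoord_apply, hij] using congrFun h i

variable [Fintype ι] {x y : ι → Bool} {i j : ι}

/-- The coordinates in which two vertices of the cube differ; their number is the Hamming
distance. -/
def diffSet (x y : ι → Bool) : Finset ι :=
  {i | x i ≠ y i}

/-- The class of a vertex in the bipartition of the cube: the number of its `true` coordinates
modulo 2. -/
def parity (x : ι → Bool) : ZMod 2 :=
  ∑ i, if x i then 1 else 0

lemma mem_diffSet : i ∈ diffSet x y ↔ x i ≠ y i :=
  mem_filter_univ i

lemma card_diffSet (x y : ι → Bool) : #(diffSet x y) = hammingDist x y := rfl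

lemma diffSet_nonempty : (diffSet x y).Nonempty ↔ x ≠ y := by
  rw [← card_pos, card_diffSet, hammingDist_pos]

lemma natCast_hammingDist (x y : ι → Bool) :
    (hammingDist x y : ZMod 2) = parity x + parity y := by
  have hbit : ∀ a b : Bool, (if a ≠ b then 1 else 0 : ZMod 2) =
      (if a then 1 else 0) + if b then 1 else 0 := by decide
  simp only [hammingDist, parity, card_filter, Nat.cast_sum, Nat.cast_ite, Nat.cast_one,
    Nat.cast_zero, hbit, sum_add_distrib]

lemma even_hammingDist_iff : Even (hammingDist x y) ↔ parity x = parity y := by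
  rw [← ZMod.natCast_eq_zero_iff_even, natCast_hammingDist, CharTwo.add_eq_zero]

variable [DecidableEq ι]

lemma diffSet_flipCoord_of_mem (hj : j ∈ diffSet x y) :
    diffSet x (flipCoord y j) = (diffSet x y).erase j := by
  ext i
  rw [mem_diffSet, flipCoord_apply, mem_erase, mem_diffSet]
  obtain rfl | hij := eq_or_ne i j
  · simpa [Bool.eq_not_iff] using mem_diffSet.1 hj
  · simp [hij]

lemma diffSet_flipCoord_of_notMem (hj : j ∉ diffSet x y) :
    diffSet x (flipCoord y j) = insert j (diffSet x y) := by
  ext i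
  rw [mem_diffSet, flipCoord_apply, mem_insert, mem_diffSet]
  obtain rfl | hij := eq_or_ne i j
  · simpa [mem_diffSet] using hj
  · simp [hij]

lemma diffSet_flipCoord_left (x y : ι → Bool) (j : ι) :
    diffSet (flipCoord x j) y = diffSet x (flipCoord y j) := by
  ext i
  rw [mem_diffSet, mem_diffSet, flipCoord_apply, flipCoord_apply]
  split_ifs
  · rw [Ne, Ne, Bool.not_eq_eq_eq_not]
  · rfl

lemma hammingDist_flipCoord_of_mem (hj : j ∈ diffSet x y) :
    hammingDist x (flipCoord y j) + 1 = hammingDist x y := by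
  rw [← card_diffSet, ← card_diffSet, diffSet_flipCoord_of_mem hj, card_erase_add_one hj]

lemma hammingDist_flipCoord_of_notMem (hj : j ∉ diffSet x y) :
    hammingDist x (flipCoord y j) = hammingDist x y + 1 := by
  rw [← card_diffSet, ← card_diffSet, diffSet_flipCoord_of_notMem hj, card_insert_of_notMem hj]

lemma hammingDist_flipCoord_left (x y : ι → Bool) (j : ι) :
    hammingDist (flipCoord x j) y = hammingDist x (flipCoord y j) := by
  rw [← card_diffSet, diffSet_flipCoord_left, card_diffSet]

lemma parity_flipCoord (x : ι → Bool) (j : ι) : parity (flipCoord x j) = parity x + 1 := by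
  have hdist : hammingDist x (flipCoord x j) = 1 := by
    rw [hammingDist_flipCoord_of_notMem (by simp [mem_diffSet]), hammingDist_self]
  have hcast := natCast_hammingDist x (flipCoord x j)
  rw [hdist, Nat.cast_one] at hcast
  rw [hcast, ← add_assoc, CharTwo.add_self_eq_zero, zero_add]

omit [DecidableEq ι] in
lemma exists_parity_eq [Nonempty ι] (p : ZMod 2) : ∃ x : ι → Bool, parity x = p := by
  classical
  let origin : ι → Bool := fun _ ↦ false
  have hcases : ∀ p q : ZMod 2, q = p ∨ q + 1 = p := by decide
  obtain h | h := hcases p (parity origin)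
  · exact ⟨origin, h⟩
  · exact ⟨flipCoord origin (Classical.arbitrary ι), (parity_flipCoord ..).trans h⟩

/-! ### The cube as a graph -/

section Graph

variable {n k : ℕ} {z z' : Fin k → Fin n → Bool} {s s' : Fin n → Bool}

lemma hypercube_adj_iff : (hypercube n).Adj s s' ↔ ∃ j, s' = flipCoord s j := by
  have hrel (s s' : Fin n → Bool) :
      (∃ j, s j ≠ s' j ∧ ∀ i, i ≠ j → s i = s' i) ↔ ∃ j, s' = flipCoord s j := by
    simp only [flipCoord, Function.eq_update_iff, ne_comm (a := s _), ← Bool.eq_not_iff, eq_comm]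
  have hsymm : (∃ j, s = flipCoord s' j) ↔ ∃ j, s' = flipCoord s j :=
    exists_congr fun j ↦ by
      constructor <;> rintro rfl <;> rw [flipCoord_flipCoord]
  have hne : (∃ j, s' = flipCoord s j) → s ≠ s' := by
    rintro ⟨j, rfl⟩ h
    simpa [flipCoord_apply] using congrFun h j
  rw [hypercube, fromRel_adj, hrel, hrel, hsymm, or_self, and_iff_right_iff_imp]
  exact hne

lemma hypercube_adj_flipCoord (s : Fin n → Bool) (j : Fin n) :
    (hypercube n).Adj s (flipCoord s j) :=
  hypercube_adj_iff.2 ⟨j, rfl⟩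

lemma exists_walk_length_eq_hammingDist (s s' : Fin n → Bool) :
    ∃ w : (hypercube n).Walk s s', w.length = hammingDist s s' := by
  induction h : hammingDist s s' generalizing s with
  | zero =>
    obtain rfl := hammingDist_eq_zero.1 h
    exact ⟨.nil, rfl⟩
  | succ d ih =>
    have hne : s ≠ s' := hammingDist_ne_zero.1 (by lia)
    obtain ⟨j, hj⟩ := diffSet_nonempty.2 hne
    have hdist := hammingDist_flipCoord_of_mem hj
    rw [← hammingDist_flipCoord_left, h, Nat.add_right_cancel_iff] at hdist
    obtain ⟨w, hw⟩ := ih _ hdist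
    exact ⟨.cons (hypercube_adj_flipCoord s j) w, by rw [Walk.length_cons, hw]⟩

lemma hammingDist_le_length (w : (hypercube n).Walk s s') : hammingDist s s' ≤ w.length := by
  induction w with
  | nil => rw [hammingDist_self, Walk.length_nil]
  | @cons s t s' hadj w ih =>
    obtain ⟨j, rfl⟩ := hypercube_adj_iff.1 hadj
    rw [hammingDist_flipCoord_left] at ih
    rw [Walk.length_cons]
    by_cases hj : j ∈ diffSet s s'
    · have := hammingDist_flipCoord_of_mem hj
      lia
    · have := hammingDist_flipCoord_of_notMem hj
      lia

lemma hypercube_dist (s s' : Fin n → Bool) : (hypercube n).dist s s' = hammingDist s s' := by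
  obtain ⟨w, hw⟩ := exists_walk_length_eq_hammingDist s s'
  obtain ⟨w', hw'⟩ := w.reachable.exists_walk_length_eq_dist
  exact le_antisymm (hw ▸ dist_le w) (hw' ▸ hammingDist_le_length w')

lemma zombieMove_hypercube_iff : ZombieMove (hypercube n) s z z' ↔
    ∃ y : Fin k → Fin n, ∀ i, y i ∈ diffSet (z i) s ∧ z' i = flipCoord (z i) (y i) := by
  rw [ZombieMove, ← Classical.skolem (b := fun _ ↦ Fin n)
    (p := fun i j ↦ j ∈ diffSet (z i) s ∧ z' i = flipCoord (z i) j)]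
  refine forall_congr' fun i ↦ ⟨fun ⟨hadj, hlt⟩ ↦ ?_, fun ⟨j, hj, hz'⟩ ↦ ?_⟩
  · obtain ⟨j, hz'⟩ := hypercube_adj_iff.1 hadj
    refine ⟨j, not_imp_comm.1 hammingDist_flipCoord_of_notMem ?_, hz'⟩
    rw [hz', hypercube_dist, hypercube_dist, hammingDist_flipCoord_left] at hlt
    lia
  · have := hammingDist_flipCoord_of_mem hj
    rw [hz', hypercube_dist, hypercube_dist, hammingDist_flipCoord_left]
    exact ⟨hypercube_adj_flipCoord .., by lia⟩

lemma ZombieMove.hammingDist_add_one (h : ZombieMove (hypercube n) s z z') (i : Fin k) :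
    hammingDist (z' i) s + 1 = hammingDist (z i) s := by
  obtain ⟨y, hy⟩ := zombieMove_hypercube_iff.1 h
  rw [(hy i).2, hammingDist_flipCoord_left, hammingDist_flipCoord_of_mem (hy i).1]

lemma ZombieMove.parity_eq_add_one (h : ZombieMove (hypercube n) s z z') (i : Fin k) :
    parity (z' i) = parity (z i) + 1 := by
  obtain ⟨y, hy⟩ := zombieMove_hypercube_iff.1 h
  rw [(hy i).2, parity_flipCoord]

end Graph

end Cube

/-! ### Evading too few zombies -/

section Survivor

open Finset

lemma exists_forall_notMem_of_card_le_two {ι κ : Type*} [Fintype ι] [Fintype κ]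
    (E : κ → Finset ι) (hcard : Fintype.card κ + #{i | Even #(E i)} < Fintype.card ι) :
    ∃ j, ∀ i, #(E i) ≤ 2 → j ∉ E i := by
  classical
  have hsmall (m : ℕ) (hm : m ≤ 2) : m ≤ 1 + if Even m then 1 else 0 := by
    interval_cases m <;> simp
  have hbound : #(({i | #(E i) ≤ 2} : Finset κ).biUnion E) < #(univ : Finset ι) :=
    calc #(({i | #(E i) ≤ 2} : Finset κ).biUnion E)
        ≤ ∑ i with #(E i) ≤ 2, #(E i) := card_biUnion_le
      _ ≤ ∑ i with #(E i) ≤ 2, (1 + if Even #(E i) then 1 else 0) :=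
        sum_le_sum fun i hi ↦ hsmall _ (mem_filter.1 hi).2
      _ ≤ ∑ i, (1 + if Even #(E i) then 1 else 0) :=
        sum_le_univ_sum_of_nonneg fun _ ↦ Nat.zero_le _
      _ = Fintype.card κ + #{i | Even #(E i)} := by
        rw [sum_add_distrib, sum_const, card_univ, smul_eq_mul, mul_one, card_filter]
      _ < #(univ : Finset ι) := hcard
  obtain ⟨j, -, hj⟩ := exists_mem_notMem_of_card_lt_card hbound
  exact ⟨j, fun i hi hji ↦ hj (mem_biUnion.2 ⟨i, mem_filter.2 ⟨mem_univ i, hi⟩, hji⟩)⟩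

lemma exists_two_mul_card_filter_eq_le {κ : Type*} [Fintype κ] (f : κ → ZMod 2) :
    ∃ p, 2 * #{i | f i = p} ≤ Fintype.card κ := by
  have hne : ∀ p : ZMod 2, ¬ p = 0 ↔ p = 1 := by decide
  have hsum := card_filter_add_card_filter_not (s := univ) (fun i ↦ f i = 0)
  simp only [hne, card_univ] at hsum
  obtain h | h := le_total #{i | f i = 0} #{i | f i = 1}
  · exact ⟨0, by lia⟩
  · exact ⟨1, by lia⟩

variable {ι κ : Type*} [Fintype ι] [Fintype κ] {z : κ → ι → Bool} {s : ι → Bool}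

/-- The survivor's invariant, with the zombies to move: no zombie is within distance 1, and at most
half of them are at odd distance. -/
def IsSafe (z : κ → ι → Bool) (s : ι → Bool) : Prop :=
  (∀ i, 2 ≤ hammingDist (z i) s) ∧ 2 * #{i | parity (z i) ≠ parity s} ≤ Fintype.card κ

variable [DecidableEq ι]

lemma exists_flipCoord_two_le_hammingDist (hz : ∀ i, z i ≠ s)
    (hcard : Fintype.card κ + #{i | parity (z i) = parity s} < Fintype.card ι) :
    ∃ j, ∀ i, 2 ≤ hammingDist (z i) (flipCoord s j) := by
  obtain ⟨j, hj⟩ := exists_forall_notMem_of_card_le_two (fun i ↦ diffSet (z i) s)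
    (by simpa only [card_diffSet, even_hammingDist_iff] using hcard)
  refine ⟨j, fun i ↦ ?_⟩
  have hpos := hammingDist_pos.2 (hz i)
  by_cases hji : j ∈ diffSet (z i) s
  · have hfar : 2 < hammingDist (z i) s := not_le.1 fun h ↦ hj i h hji
    have := hammingDist_flipCoord_of_mem hji
    lia
  · have := hammingDist_flipCoord_of_notMem hji
    lia

lemma exists_isSafe_flipCoord (hcard : 3 * Fintype.card κ < 2 * Fintype.card ι)
    (hz : ∀ i, z i ≠ s) (hpar : 2 * #{i | parity (z i) = parity s} ≤ Fintype.card κ) :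
    ∃ j, IsSafe z (flipCoord s j) := by
  obtain ⟨j, hj⟩ := exists_flipCoord_two_le_hammingDist hz (by lia)
  have hne : ∀ p q : ZMod 2, p ≠ q + 1 ↔ p = q := by decide
  exact ⟨j, hj, by simpa only [parity_flipCoord, hne] using hpar⟩

omit [DecidableEq ι] in
lemma exists_parity_eq_forall_ne (hcard : Fintype.card κ < Fintype.card ι) (z : κ → ι → Bool)
    (p : ZMod 2) : ∃ s, parity s = p ∧ ∀ i, z i ≠ s := by
  classical
  have : Nonempty ι := Fintype.card_pos_iff.1 (by lia)
  obtain ⟨x, hx⟩ := exists_parity_eq (ι := ι) (p - 1)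
  have hlt : #(univ.image z) < #(univ.image (flipCoord x)) :=
    calc #(univ.image z) ≤ Fintype.card κ := card_image_le
      _ < Fintype.card ι := hcard
      _ = #(univ.image (flipCoord x)) := (card_image_of_injective _ (flipCoord_injective x)).symm
  obtain ⟨s, hs, hsz⟩ := exists_mem_notMem_of_card_lt_card hlt
  obtain ⟨j, -, rfl⟩ := mem_image.1 hs
  exact ⟨_, by rw [parity_flipCoord, hx, sub_add_cancel],
    fun i hi ↦ hsz (mem_image.2 ⟨i, mem_univ i, hi⟩)⟩

omit [DecidableEq ι] in
lemma exists_isSafe (hcard : 3 * Fintype.card κ < 2 * Fintype.card ι) (z : κ → ι → Bool) :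
    ∃ s, IsSafe z s := by
  classical
  obtain ⟨p, hp⟩ := exists_two_mul_card_filter_eq_le fun i ↦ parity (z i)
  obtain ⟨s, rfl, hs⟩ := exists_parity_eq_forall_ne (by lia) z p
  obtain ⟨j, hj⟩ := exists_isSafe_flipCoord hcard hs hp
  exact ⟨_, hj⟩

theorem not_zombiesWinWith_hypercube {n k : ℕ} (hk : 3 * k < 2 * n) :
    ¬ ZombiesWinWith (hypercube n) k := by
  rintro ⟨z, hz⟩
  have hcard : 3 * Fintype.card (Fin k) < 2 * Fintype.card (Fin n) := by simpa using hk
  obtain ⟨s, hs⟩ := exists_isSafe hcard z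
  refine not_zombiesCatchFrom_of_invariant (fun z s hsafe i ↦ ?_) (fun z s z' hsafe hmove ↦ ?_)
    hs (hz s)
  · exact hammingDist_pos.1 (two_pos.trans_le (hsafe.1 i))
  · have hfree (i : Fin k) : z' i ≠ s := by
      have := hmove.hammingDist_add_one i
      have := hsafe.1 i
      exact hammingDist_pos.1 (by lia)
    have hne : ∀ p q : ZMod 2, p + 1 = q ↔ p ≠ q := by decide
    have hpar : 2 * #{i | parity (z' i) = parity s} ≤ Fintype.card (Fin k) := by
      simpa only [hmove.parity_eq_add_one, hne] using hsafe.2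
    obtain ⟨j, hj⟩ := exists_isSafe_flipCoord hcard hfree hpar
    exact ⟨hfree, _, .inr (hypercube_adj_flipCoord s j), hj⟩

end Survivor

/-! ### Catching with enough zombies -/

section Zombies

open Finset

lemma exists_ne_not_disjoint_of_card_biUnion_lt {ι κ : Type*} [DecidableEq ι] [Fintype κ]
    {E : κ → Finset ι} (h : #(univ.biUnion E) < ∑ i, #(E i)) :
    ∃ i₀ i₁, i₀ ≠ i₁ ∧ ¬ Disjoint (E i₀) (E i₁) := by
  by_contra! hdisj
  exact h.ne (card_biUnion fun i _ l _ hil ↦ hdisj i l hil)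

/-- The set `E i₀` gives up the shared element `e`, so it keeps the new element `j`, which all
other sets give up. -/
lemma exists_biUnion_erase_insert_superset {ι κ : Type*} [DecidableEq ι] [Fintype κ]
    {E : κ → Finset ι} {i₀ i₁ : κ} {j : ι} (hne : i₀ ≠ i₁) (hdisj : ¬ Disjoint (E i₀) (E i₁))
    (hj : ∀ i, j ∉ E i) :
    ∃ y : κ → ι, (∀ i, y i ∈ insert j (E i)) ∧
      insert j (univ.biUnion E) ⊆ univ.biUnion fun i ↦ (insert j (E i)).erase (y i) := by
  classical
  obtain ⟨e, he₀, he₁⟩ := not_disjoint_iff.1 hdisj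
  have hej : e ≠ j := fun h ↦ hj i₀ (h ▸ he₀)
  refine ⟨fun i ↦ if i = i₀ then e else j, fun i ↦ ?_, fun a ha ↦ ?_⟩
  · dsimp only
    split_ifs with hi
    · exact mem_insert_of_mem (hi ▸ he₀)
    · exact mem_insert_self j _
  · simp only [mem_biUnion, mem_univ, true_and, mem_insert, mem_erase] at ha ⊢
    obtain rfl | ⟨i, ha⟩ := ha
    · exact ⟨i₀, by simp [hej.symm]⟩
    · have haj : a ≠ j := fun h ↦ hj i (h ▸ ha)
      obtain rfl | hae := eq_or_ne a e
      · exact ⟨i₁, by simp [hne.symm, haj, he₁]⟩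
      · exact ⟨i, by split_ifs <;> simp [haj, hae, ha]⟩

section Potential

variable {ι κ : Type*} [Fintype ι] [DecidableEq ι] [Fintype κ] {z : κ → ι → Bool} {s : ι → Bool}

/-- The union of the sets of coordinates separating the survivor from the zombies. -/
def diffUnion (z : κ → ι → Bool) (s : ι → Bool) : Finset ι :=
  univ.biUnion fun i ↦ diffSet (z i) s

/-- The quantity the zombies decrease lexicographically: the sum of their distances to the
survivor, then the number of coordinates in which the survivor agrees with all of them. -/
def potential (z : κ → ι → Bool) (s : ι → Bool) : ℕ ×ₗ ℕ :=
  toLex (∑ i, hammingDist (z i) s, #(diffUnion z s)ᶜ)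

lemma exists_card_diffUnion_lt {j : ι} (hj : j ∉ diffUnion z s)
    (hsum : Fintype.card ι ≤ ∑ i, hammingDist (z i) s) :
    ∃ y : κ → ι, (∀ i, y i ∈ diffSet (z i) (flipCoord s j)) ∧
      #(diffUnion z s) < #(diffUnion (fun i ↦ flipCoord (z i) (y i)) (flipCoord s j)) := by
  have hj' (i : κ) : j ∉ diffSet (z i) s :=
    fun hi ↦ hj (mem_biUnion.2 ⟨i, mem_univ i, hi⟩)
  obtain ⟨i₀, i₁, hne, hdisj⟩ := exists_ne_not_disjoint_of_card_biUnion_lt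
    ((card_lt_univ_of_notMem hj).trans_le hsum)
  obtain ⟨y, hy, hsub⟩ := exists_biUnion_erase_insert_superset hne hdisj hj'
  simp only [← diffSet_flipCoord_of_notMem (hj' _)] at hy hsub
  simp only [← diffSet_flipCoord_of_mem (hy _), ← diffSet_flipCoord_left _ (flipCoord s j)] at hsub
  refine ⟨y, hy, ?_⟩
  calc #(diffUnion z s) < #(insert j (diffUnion z s)) := by
        rw [card_insert_of_notMem hj]; exact Nat.lt_succ_self _
    _ ≤ _ := card_le_card hsub

end Potential

/-- The zombies' invariant: each parity class contains about half of them. -/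
def IsBalanced {ι κ : Type*} [Fintype ι] [Fintype κ] (z : κ → ι → Bool) : Prop :=
  ∀ p, Fintype.card κ / 2 ≤ #{i | parity (z i) = p}

lemma IsBalanced.le_sum_hammingDist {ι κ : Type*} [Fintype ι] [Fintype κ] {z : κ → ι → Bool}
    {s : ι → Bool} (hz : IsBalanced z) (hfree : ∀ i, z i ≠ s) :
    Fintype.card κ + Fintype.card κ / 2 ≤ ∑ i, hammingDist (z i) s := by
  have hdist (i : κ) : 1 + (if parity (z i) = parity s then 1 else 0) ≤ hammingDist (z i) s := by
    have hpos := hammingDist_pos.2 (hfree i)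
    split_ifs with h
    · obtain ⟨m, hm⟩ := even_hammingDist_iff.2 h
      lia
    · exact hpos
  calc Fintype.card κ + Fintype.card κ / 2
      ≤ Fintype.card κ + #{i | parity (z i) = parity s} := by grw [hz (parity s)]
    _ = ∑ i, (1 + if parity (z i) = parity s then 1 else 0) := by
      rw [sum_add_distrib, sum_const, card_univ, smul_eq_mul, mul_one, card_filter]
    _ ≤ ∑ i, hammingDist (z i) s := sum_le_sum fun i _ ↦ hdist i

lemma exists_isBalanced (ι κ : Type*) [Fintype ι] [Nonempty ι] [Fintype κ] :
    ∃ z : κ → ι → Bool, IsBalanced z := by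
  classical
  obtain ⟨A, -, hA⟩ := exists_subset_card_eq (Nat.div_le_self #(univ : Finset κ) 2)
  obtain ⟨v, hv⟩ := exists_parity_eq (ι := ι) 0
  obtain ⟨w, hw⟩ := exists_parity_eq (ι := ι) 1
  rw [card_univ] at hA
  have hcases : ∀ p : ZMod 2, p = 0 ∨ p = 1 := by decide
  have hparity (i : κ) : parity (if i ∈ A then v else w) = if i ∈ A then 0 else 1 := by
    rw [apply_ite parity, hv, hw]
  refine ⟨fun i ↦ if i ∈ A then v else w, fun p ↦ ?_⟩
  obtain rfl | rfl := hcases p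
  · have hclass : ({i | (if i ∈ A then 0 else 1 : ZMod 2) = 0} : Finset κ) = A := by ext; simp
    simp only [hparity, hclass, hA, le_refl]
  · have hclass : ({i | (if i ∈ A then 0 else 1 : ZMod 2) = 1} : Finset κ) = Aᶜ := by ext; simp
    simp only [hparity, hclass, card_compl, hA]
    lia

variable {n k : ℕ} {z z' : Fin k → Fin n → Bool} {s s' : Fin n → Bool}

lemma IsBalanced.zombieMove (hz : IsBalanced z) (hmove : ZombieMove (hypercube n) s z z') :
    IsBalanced z' := by
  intro p
  simpa only [hmove.parity_eq_add_one, ← eq_sub_iff_add_eq] using hz (p - 1)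

lemma exists_zombieMove (hz : ∀ i, z i ≠ s) : ∃ z', ZombieMove (hypercube n) s z z' := by
  choose y hy using fun i ↦ diffSet_nonempty.2 (hz i)
  exact ⟨_, zombieMove_hypercube_iff.2 ⟨y, fun i ↦ ⟨hy i, rfl⟩⟩⟩

lemma SurvivorMove.hammingDist_le (h : SurvivorMove (hypercube n) s s') (x : Fin n → Bool) :
    hammingDist x s' ≤ hammingDist x s + 1 := by
  obtain rfl | hadj := h
  · exact Nat.le_succ _
  · obtain ⟨j, rfl⟩ := hypercube_adj_iff.1 hadj
    by_cases hj : j ∈ diffSet x s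
    · have := hammingDist_flipCoord_of_mem hj
      lia
    · exact (hammingDist_flipCoord_of_notMem hj).le

lemma ZombieMove.hammingDist_le (hmove : ZombieMove (hypercube n) s' z z')
    (hs' : SurvivorMove (hypercube n) s s') (i : Fin k) :
    hammingDist (z' i) s' ≤ hammingDist (z i) s :=
  Nat.le_of_add_le_add_right ((hmove.hammingDist_add_one i).trans_le (hs'.hammingDist_le (z i)))

lemma exists_zombieMove_potential_lt (hk : 0 < k) (hsum : n ≤ ∑ i, hammingDist (z i) s)
    (hs' : SurvivorMove (hypercube n) s s') (hfree : ∀ i, z i ≠ s') :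
    ∃ z', ZombieMove (hypercube n) s' z z' ∧ potential z' s' < potential z s := by
  by_cases hnear : ∃ i, hammingDist (z i) s' ≤ hammingDist (z i) s
  · obtain ⟨i, hi⟩ := hnear
    obtain ⟨z', hmove⟩ := exists_zombieMove hfree
    have hlt : hammingDist (z' i) s' < hammingDist (z i) s :=
      Nat.lt_of_succ_le ((hmove.hammingDist_add_one i).trans_le hi)
    exact ⟨z', hmove, Prod.Lex.toLex_lt_toLex.2 <| .inl <|
      sum_lt_sum (fun i _ ↦ hmove.hammingDist_le hs' i) ⟨i, mem_univ i, hlt⟩⟩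
  · push Not at hnear
    have hpass : s' ≠ s := fun h ↦ (hnear ⟨0, hk⟩).ne' (by rw [h])
    obtain ⟨j, rfl⟩ := hypercube_adj_iff.1 (hs'.resolve_left hpass)
    have hj : j ∉ diffUnion z s := by
      intro hj
      obtain ⟨i, -, hi⟩ := mem_biUnion.1 hj
      have := hammingDist_flipCoord_of_mem hi
      have := hnear i
      lia
    obtain ⟨y, hy, hlt⟩ := exists_card_diffUnion_lt hj (by rwa [Fintype.card_fin])
    have hmove := zombieMove_hypercube_iff.2 ⟨y, fun i ↦ ⟨hy i, rfl⟩⟩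
    have hle : ∑ i, hammingDist (flipCoord (z i) (y i)) (flipCoord s j) ≤
        ∑ i, hammingDist (z i) s := sum_le_sum fun i _ ↦ hmove.hammingDist_le hs' i
    refine ⟨_, hmove, Prod.Lex.toLex_lt_toLex'.2 ⟨hle, fun _ ↦ ?_⟩⟩
    have := card_le_univ (diffUnion (fun i ↦ flipCoord (z i) (y i)) (flipCoord s j))
    rw [card_compl, card_compl]
    lia

lemma zombiesCatchFrom_of_isBalanced (hn : 1 ≤ n) (hk : 2 * n ≤ 3 * k) (hz : IsBalanced z)
    (hfree : ∀ i, z i ≠ s) (hs' : SurvivorMove (hypercube n) s s') :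
    ZombiesCatchFrom (hypercube n) z s' := by
  induction h : potential z s using WellFoundedLT.induction generalizing z s s' with
  | ind _ ih =>
    subst h
    by_cases hcaught : ∃ i, z i = s'
    · exact zombiesCatchFrom_of_eq hcaught
    have hsum : n ≤ ∑ i, hammingDist (z i) s := by
      have := hz.le_sum_hammingDist hfree
      rw [Fintype.card_fin] at this
      lia
    obtain ⟨z', hmove, hlt⟩ :=
      exists_zombieMove_potential_lt (by lia) hsum hs' (not_exists.1 hcaught)
    by_cases hcaught' : ∃ i, z' i = s'
    · exact zombiesCatchFrom_of_zombieMove_of_eq hmove hcaught'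
    · exact zombiesCatchFrom_of_zombieMove hmove fun _ hs'' ↦
        ih _ hlt (hz.zombieMove hmove) (not_exists.1 hcaught') hs'' rfl

theorem zombiesWinWith_hypercube (hn : 1 ≤ n) (hk : 2 * n ≤ 3 * k) :
    ZombiesWinWith (hypercube n) k := by
  have : Nonempty (Fin n) := ⟨⟨0, hn⟩⟩
  obtain ⟨z, hz⟩ := exists_isBalanced (Fin n) (Fin k)
  refine ⟨z, fun s ↦ ?_⟩
  by_cases hcaught : ∃ i, z i = s
  · exact zombiesCatchFrom_of_eq hcaught
  · exact zombiesCatchFrom_of_isBalanced hn hk hz (not_exists.1 hcaught) (.inl rfl)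

end Zombies

theorem zombiesWinWith_hypercube_iff {n k : ℕ} (hn : 1 ≤ n) :
    ZombiesWinWith (hypercube n) k ↔ 2 * n ≤ 3 * k :=
  ⟨fun h ↦ not_lt.1 fun hk ↦ not_zombiesWinWith_hypercube hk h, zombiesWinWith_hypercube hn⟩

/-- For every `n ≥ 1`, the zombie number of the `n`-dimensional hypercube is
`z(Q_n) = ⌈2n/3⌉`. -/
theorem zombie_number_hypercube (n : ℕ) (hn : 1 ≤ n) :
    zombieNumber (hypercube n) = (2 * n + 2) / 3 := by
  have hleast : IsLeast {k | ZombiesWinWith (hypercube n) k} ((2 * n + 2) / 3) :=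
    ⟨(zombiesWinWith_hypercube_iff hn).2 (by lia), fun k hk ↦ by
      have := (zombiesWinWith_hypercube_iff hn).1 hk
      lia⟩
  exact hleast.csInf_eq
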